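/- Let F_128 = F_2[X]/(X⁷+X+1) and let α be the class of X. Then the quadruple H_3 = [1, 1], H_2 = [α⁶+α³, α⁶+α⁵+α⁴+α²+1], H_1 = [α⁵+α⁴, 1], H_0 = [α⁴+α+1, α⁴+α³+α²+1] defines a (2,1,3) complete 4-MDP convolutional code over F_128: the cubic polynomials h_1(z) and h_2(z) are coprime in F_128[z] (their resultant equals α²+α+1 ≠ 0) and the complete 4-MDP minor condition holds, i.e. every full size minor of 𝔥_4 ∈ F_128^{5×16} formed by an admissible choice of columns is nonzero. -/

import Mathlib

/-!
Everything reduces to arithmetic in `F_2[X]/(X⁷+X+1)`.  As `|F| = 128`, the field `F` has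
characteristic 2, and `α⁷ = α + 1`.

* The Sylvester determinant, the invertibility of `α² + α + 1` and the coprimality of the two cubics
  (by an explicit Bézout identity) are polynomial identities in `α` that hold modulo `2` and
  `α⁷ + α + 1`; each is given by its two cofactors.
* A choice of columns `j_0 < ⋯ < j_4` (0-based) is admissible iff `2i ≤ j_i ≤ 2i + 7` for all `i`;
  there are 3264 of them.  Their minors are evaluated by arithmetic on natural numbers (Kronecker
  substitution): `∑ aᵢ αⁱ` with bits `aᵢ`, `i < 7`, is encoded as `∑ aᵢ 256ⁱ` (`Code`).  A sum of a few
  products of codes has base-256 digits that do not overflow, so that `red` recovers the code of the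
  sum of products in `F` (`RawCode.red`).  The search `level1`, …, `level5` adds the columns one at a
  time, keeping the codes of all the minors of the columns chosen so far (the coordinates of their
  exterior product, without signs in characteristic 2), and tests that each 5 × 5 minor has a
  nonzero code.
* An element with nonzero code is nonzero (`Code.ne_zero`), because each of the 127 nonzero codes
  has 127th power equal to 1.
-/

open Polynomial

/-- The partial parity-check matrix `𝔥_j` built from coefficient matrices
`H_0, …, H_ν ∈ R^{(n-k)×n}`: the block in block-row `r ∈ {0,…,j}` and block-column
`c ∈ {0,…,ν+j}` is `H_{ν+r-c}` if `r ≤ c ≤ ν + r` and the zero matrix otherwise. -/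
def pcm {R : Type*} [CommRing R] (n k ν : ℕ) (hn : 0 < n) (hnk : k < n)
    (H : Fin (ν + 1) → Matrix (Fin (n - k)) (Fin n) R) (j : ℕ) :
    Matrix (Fin ((j + 1) * (n - k))) (Fin ((ν + j + 1) * n)) R :=
  fun p q =>
    if h : (p : ℕ) / (n - k) ≤ (q : ℕ) / n ∧ (q : ℕ) / n ≤ ν + (p : ℕ) / (n - k) then
      H ⟨ν + (p : ℕ) / (n - k) - (q : ℕ) / n, by omega⟩
        ⟨(p : ℕ) % (n - k), Nat.mod_lt _ (by omega)⟩
        ⟨(q : ℕ) % n, Nat.mod_lt _ hn⟩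
    else 0

/-- A (0-based) strictly increasing choice `js` of `(j+1)(n-k)` columns of `𝔥_j` is
admissible if (with 1-based indices) `j_{(n-k)s+1} > sn` and `j_{(n-k)s} ≤ sn + νn`
for all `s = 1, …, j`. -/
def Admissible (n k ν j : ℕ) (js : Fin ((j + 1) * (n - k)) → Fin ((ν + j + 1) * n)) : Prop :=
  StrictMono js ∧
  ∀ s : ℕ, 1 ≤ s → s ≤ j →
    ∀ (h1 : (n - k) * s < (j + 1) * (n - k)) (h2 : (n - k) * s - 1 < (j + 1) * (n - k)),
      s * n ≤ (js ⟨(n - k) * s, h1⟩ : ℕ) ∧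
      (js ⟨(n - k) * s - 1, h2⟩ : ℕ) < s * n + ν * n

/-- The complete `j`-MDP minor condition: every full size minor of `𝔥_j` formed by an
admissible choice of columns is nonzero. -/
def CompleteJMDP {F : Type*} [Field F] (n k ν : ℕ) (hn : 0 < n) (hnk : k < n)
    (H : Fin (ν + 1) → Matrix (Fin (n - k)) (Fin n) F) (j : ℕ) : Prop :=
  ∀ js : Fin ((j + 1) * (n - k)) → Fin ((ν + j + 1) * n), Admissible n k ν j js →
    ((pcm n k ν hn hnk H j).submatrix id js).det ≠ 0

/-- `hpoly3 c0 c1 c2 c3 = c0 + c1·z + c2·z² + c3·z³`. -/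
noncomputable def hpoly3 {F : Type*} [Field F] (c0 c1 c2 c3 : F) : Polynomial F :=
  C c0 + C c1 * X + C c2 * X ^ 2 + C c3 * X ^ 3

/-- The quadruple `(H_0, H_1, H_2, H_3)` of `1 × 2` coefficient matrices
`H_i = [h_{1,i}, h_{2,i}]` (parameters `n = 2`, `k = 1`, `ν = 3`). -/
def Hquad {F : Type*} [Field F] (h10 h11 h12 h13 h20 h21 h22 h23 : F) :
    Fin (3 + 1) → Matrix (Fin (2 - 1)) (Fin 2) F :=
  ![Matrix.of fun _ c => ![h10, h20] c,
    Matrix.of fun _ c => ![h11, h21] c,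
    Matrix.of fun _ c => ![h12, h22] c,
    Matrix.of fun _ c => ![h13, h23] c]

/-- `(H_3, H_2, H_1, H_0)` defines a `(2,1,3)` complete `j`-MDP convolutional code:
the cubics `h_1(z)` and `h_2(z)` are coprime in `F[z]` (equivalently, `H(z)` is left
prime) and the complete `j`-MDP minor condition holds. -/
def Is213 {F : Type*} [Field F] (j : ℕ) (h10 h11 h12 h13 h20 h21 h22 h23 : F) : Prop :=
  IsCoprime (hpoly3 h10 h11 h12 h13) (hpoly3 h20 h21 h22 h23) ∧
  CompleteJMDP 2 1 3 (by norm_num) (by norm_num)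
    (Hquad h10 h11 h12 h13 h20 h21 h22 h23) j

/-! ### Codes of field elements -/

/-- Apply `k` to `n` by recursion on `n`, so that reduction evaluates `n` before it enters `k`. -/
def force {β : Type} (n : ℕ) (k : ℕ → β) : β :=
  Nat.rec (k 0) (fun m _ => k (Nat.succ m)) n

theorem force_eq {β : Type} (n : ℕ) (k : ℕ → β) : force n k = k n := by
  cases n <;> rfl

/-- Reduction of a base-256 code modulo `2` and `X⁷ + X + 1`: the digits from the seventh on are
folded back by `X⁷ = X + 1`, and the mask `∑_{i < 7} 256ⁱ` keeps the parities of the first seven. -/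
def red (n : ℕ) : ℕ :=
  force n fun n =>
    Nat.land (Nat.add n (Nat.mul (Nat.shiftRight n 56) 257)) 282578800148737

/-- `n = ∑ cᵢ 256ⁱ` is the code of `x = ∑ cᵢ αⁱ`, with bits `cᵢ` for `i < 7`. -/
def Code {F : Type*} [Field F] (α : F) (n : ℕ) (x : F) : Prop :=
  ∃ c0 c1 c2 c3 c4 c5 c6 : ℕ,
    c0 ≤ 1 ∧ c1 ≤ 1 ∧ c2 ≤ 1 ∧ c3 ≤ 1 ∧ c4 ≤ 1 ∧ c5 ≤ 1 ∧ c6 ≤ 1 ∧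
    n = c0 + 256 * (c1 + 256 * (c2 + 256 * (c3 + 256 * (c4 + 256 * (c5 + 256 * (c6)))))) ∧
    x = (c0 : F) * α ^ 0 + (c1 : F) * α ^ 1 + (c2 : F) * α ^ 2 + (c3 : F) * α ^ 3 + (c4 : F) * α ^ 4 + (c5 : F) * α ^ 5 + (c6 : F) * α ^ 6

/-- `n = ∑ cᵢ 256ⁱ` is an unreduced code of `x = ∑ cᵢ αⁱ`, with digits `cᵢ ≤ B` for `i < 13`. -/
def RawCode {F : Type*} [Field F] (α : F) (B n : ℕ) (x : F) : Prop :=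
  ∃ c0 c1 c2 c3 c4 c5 c6 c7 c8 c9 c10 c11 c12 : ℕ,
    c0 ≤ B ∧ c1 ≤ B ∧ c2 ≤ B ∧ c3 ≤ B ∧ c4 ≤ B ∧ c5 ≤ B ∧ c6 ≤ B ∧ c7 ≤ B ∧ c8 ≤ B ∧ c9 ≤ B ∧
    c10 ≤ B ∧ c11 ≤ B ∧ c12 ≤ B ∧
    n = c0 + 256 * (c1 + 256 * (c2 + 256 * (c3 + 256 * (c4 + 256 * (c5 + 256 * (c6 + 256 * (c7 + 256 * (c8 + 256 * (c9 + 256 * (c10 + 256 * (c11 + 256 * (c12)))))))))))) ∧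
    x = (c0 : F) * α ^ 0 + (c1 : F) * α ^ 1 + (c2 : F) * α ^ 2 + (c3 : F) * α ^ 3 + (c4 : F) * α ^ 4 + (c5 : F) * α ^ 5 + (c6 : F) * α ^ 6 + (c7 : F) * α ^ 7 + (c8 : F) * α ^ 8 + (c9 : F) * α ^ 9 + (c10 : F) * α ^ 10 + (c11 : F) * α ^ 11 + (c12 : F) * α ^ 12

theorem land_step {c : ℕ} (hc : c < 256) (r m : ℕ) :
    (c + 256 * r) &&& (1 + 256 * m) = c % 2 + 256 * (r &&& m) := by
  have h1 : ((c + 256 * r) &&& (1 + 256 * m)) % 2 ^ 8 = c % 2 := by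
    rw [Nat.and_mod_two_pow]
    have e1 : (c + 256 * r) % 2 ^ 8 = c := by omega
    have e2 : (1 + 256 * m) % 2 ^ 8 = 1 := by omega
    rw [e1, e2, Nat.and_one_is_mod]
  have h2 : ((c + 256 * r) &&& (1 + 256 * m)) / 2 ^ 8 = r &&& m := by
    rw [Nat.and_div_two_pow]
    have e1 : (c + 256 * r) / 2 ^ 8 = r := by omega
    have e2 : (1 + 256 * m) / 2 ^ 8 = m := by omega
    rw [e1, e2]
  omega

theorem horner_shift (c0 c1 c2 c3 c4 c5 c6 c7 c8 c9 c10 c11 c12 : ℕ)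
    (h0 : c0 ≤ 85) (h1 : c1 ≤ 85) (h2 : c2 ≤ 85) (h3 : c3 ≤ 85) (h4 : c4 ≤ 85) (h5 : c5 ≤ 85)
    (h6 : c6 ≤ 85) :
    (c0 + 256 * (c1 + 256 * (c2 + 256 * (c3 + 256 * (c4 + 256 * (c5 + 256 * (c6 + 256 * (c7 + 256 * (c8 + 256 * (c9 + 256 * (c10 + 256 * (c11 + 256 * (c12))))))))))))) >>> 56 =
      c7 + 256 * (c8 + 256 * (c9 + 256 * (c10 + 256 * (c11 + 256 * (c12))))) := by
  rw [Nat.shiftRight_eq_div_pow]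
  omega

/-- The mask in `red`, written by its base-256 digits. -/
theorem red_def (n : ℕ) : red n = (n + (n >>> 56) * 257) &&&
    (1 + 256 * (1 + 256 * (1 + 256 * (1 + 256 * (1 + 256 * (1 + 256 * (1 + 256 * 0))))))) :=
  force_eq n _

/-- The bound 85 keeps the folded digits, each a sum of at most three old ones, below 256. -/
theorem red_horner (c0 c1 c2 c3 c4 c5 c6 c7 c8 c9 c10 c11 c12 : ℕ)
    (h0 : c0 ≤ 85) (h1 : c1 ≤ 85) (h2 : c2 ≤ 85) (h3 : c3 ≤ 85) (h4 : c4 ≤ 85) (h5 : c5 ≤ 85)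
    (h6 : c6 ≤ 85) (h7 : c7 ≤ 85) (h8 : c8 ≤ 85) (h9 : c9 ≤ 85) (h10 : c10 ≤ 85)
    (h11 : c11 ≤ 85) (h12 : c12 ≤ 85) :
    red (c0 + 256 * (c1 + 256 * (c2 + 256 * (c3 + 256 * (c4 + 256 * (c5 + 256 * (c6 + 256 * (c7 + 256 * (c8 + 256 * (c9 + 256 * (c10 + 256 * (c11 + 256 * (c12))))))))))))) =
      (c0 + c7) % 2 + 256 * ((c1 + c8 + c7) % 2 + 256 * ((c2 + c9 + c8) % 2 + 256 * ((c3 + c10 + c9) % 2 + 256 * ((c4 + c11 + c10) % 2 + 256 * ((c5 + c12 + c11) % 2 + 256 * ((c6 + c12) % 2)))))) := by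
  have hd : c0 + 256 * (c1 + 256 * (c2 + 256 * (c3 + 256 * (c4 + 256 * (c5 + 256 * (c6 + 256 * (c7 + 256 * (c8 + 256 * (c9 + 256 * (c10 + 256 * (c11 + 256 * (c12)))))))))))) +
      (c7 + 256 * (c8 + 256 * (c9 + 256 * (c10 + 256 * (c11 + 256 * (c12)))))) * 257 =
      (c0 + c7) + 256 * ((c1 + c8 + c7) + 256 * ((c2 + c9 + c8) + 256 * ((c3 + c10 + c9) + 256 * ((c4 + c11 + c10) + 256 * ((c5 + c12 + c11) + 256 * ((c6 + c12) + 256 * (c7 + 256 * (c8 + 256 * (c9 + 256 * (c10 + 256 * (c11 + 256 * (c12)))))))))))) := by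
    ring
  rw [red_def, horner_shift _ _ _ _ _ _ _ _ _ _ _ _ _ h0 h1 h2 h3 h4 h5 h6, hd]
  rw [land_step (show c0 + c7 < 256 by omega),
    land_step (show c1 + c8 + c7 < 256 by omega),
    land_step (show c2 + c9 + c8 < 256 by omega),
    land_step (show c3 + c10 + c9 < 256 by omega),
    land_step (show c4 + c11 + c10 < 256 by omega),
    land_step (show c5 + c12 + c11 < 256 by omega),
    land_step (show c6 + c12 < 256 by omega),
    Nat.and_zero, Nat.mul_zero, Nat.add_zero]

section Codes

variable {F : Type*} [Field F] {α : F}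

theorem RawCode.add {A B m n : ℕ} {x y : F} (h : RawCode α A m x) (h' : RawCode α B n y) :
    RawCode α (A + B) (m + n) (x + y) := by
  obtain ⟨c0, c1, c2, c3, c4, c5, c6, c7, c8, c9, c10, c11, c12, hc0, hc1, hc2, hc3, hc4, hc5, hc6, hc7, hc8, hc9, hc10, hc11, hc12, hm, hx⟩ := h
  obtain ⟨d0, d1, d2, d3, d4, d5, d6, d7, d8, d9, d10, d11, d12, hd0, hd1, hd2, hd3, hd4, hd5, hd6, hd7, hd8, hd9, hd10, hd11, hd12, hn, hy⟩ := h'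
  refine ⟨c0 + d0, c1 + d1, c2 + d2, c3 + d3, c4 + d4, c5 + d5, c6 + d6, c7 + d7, c8 + d8, c9 + d9, c10 + d10, c11 + d11, c12 + d12,
    add_le_add hc0 hd0, add_le_add hc1 hd1, add_le_add hc2 hd2, add_le_add hc3 hd3, add_le_add hc4 hd4, add_le_add hc5 hd5, add_le_add hc6 hd6, add_le_add hc7 hd7, add_le_add hc8 hd8, add_le_add hc9 hd9, add_le_add hc10 hd10, add_le_add hc11 hd11, add_le_add hc12 hd12, by rw [hm, hn]; ring, ?_⟩
  rw [hx, hy]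
  push_cast
  ring

theorem Code.mul {m n : ℕ} {x y : F} (h : Code α m x) (h' : Code α n y) :
    RawCode α 7 (m * n) (x * y) := by
  obtain ⟨a0, a1, a2, a3, a4, a5, a6, ha0, ha1, ha2, ha3, ha4, ha5, ha6, rfl, rfl⟩ := h
  obtain ⟨b0, b1, b2, b3, b4, b5, b6, hb0, hb1, hb2, hb3, hb4, hb5, hb6, rfl, rfl⟩ := h'
  have mul_le {a b : ℕ} (ha : a ≤ 1) (hb : b ≤ 1) : a * b ≤ 1 := Nat.mul_le_mul ha hb
  refine ⟨a0 * b0,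
    a0 * b1 + a1 * b0,
    a0 * b2 + a1 * b1 + a2 * b0,
    a0 * b3 + a1 * b2 + a2 * b1 + a3 * b0,
    a0 * b4 + a1 * b3 + a2 * b2 + a3 * b1 + a4 * b0,
    a0 * b5 + a1 * b4 + a2 * b3 + a3 * b2 + a4 * b1 + a5 * b0,
    a0 * b6 + a1 * b5 + a2 * b4 + a3 * b3 + a4 * b2 + a5 * b1 + a6 * b0,
    a1 * b6 + a2 * b5 + a3 * b4 + a4 * b3 + a5 * b2 + a6 * b1,
    a2 * b6 + a3 * b5 + a4 * b4 + a5 * b3 + a6 * b2,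
    a3 * b6 + a4 * b5 + a5 * b4 + a6 * b3,
    a4 * b6 + a5 * b5 + a6 * b4,
    a5 * b6 + a6 * b5,
    a6 * b6,
    ?_, ?_, ?_, ?_, ?_, ?_, ?_, ?_, ?_, ?_, ?_, ?_, ?_, by ring, ?_⟩
  · linarith [mul_le ha0 hb0]
  · linarith [mul_le ha0 hb1, mul_le ha1 hb0]
  · linarith [mul_le ha0 hb2, mul_le ha1 hb1, mul_le ha2 hb0]
  · linarith [mul_le ha0 hb3, mul_le ha1 hb2, mul_le ha2 hb1, mul_le ha3 hb0]
  · linarith [mul_le ha0 hb4, mul_le ha1 hb3, mul_le ha2 hb2, mul_le ha3 hb1, mul_le ha4 hb0]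
  · linarith [mul_le ha0 hb5, mul_le ha1 hb4, mul_le ha2 hb3, mul_le ha3 hb2, mul_le ha4 hb1, mul_le ha5 hb0]
  · linarith [mul_le ha0 hb6, mul_le ha1 hb5, mul_le ha2 hb4, mul_le ha3 hb3, mul_le ha4 hb2, mul_le ha5 hb1, mul_le ha6 hb0]
  · linarith [mul_le ha1 hb6, mul_le ha2 hb5, mul_le ha3 hb4, mul_le ha4 hb3, mul_le ha5 hb2, mul_le ha6 hb1]
  · linarith [mul_le ha2 hb6, mul_le ha3 hb5, mul_le ha4 hb4, mul_le ha5 hb3, mul_le ha6 hb2]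
  · linarith [mul_le ha3 hb6, mul_le ha4 hb5, mul_le ha5 hb4, mul_le ha6 hb3]
  · linarith [mul_le ha4 hb6, mul_le ha5 hb5, mul_le ha6 hb4]
  · linarith [mul_le ha5 hb6, mul_le ha6 hb5]
  · linarith [mul_le ha6 hb6]
  push_cast
  ring

theorem RawCode.red [CharP F 2] (hα : α ^ 7 = α + 1) {B n : ℕ} {x : F} (h : RawCode α B n x)
    (hB : B ≤ 85) : Code α (red n) x := by
  obtain ⟨c0, c1, c2, c3, c4, c5, c6, c7, c8, c9, c10, c11, c12, hc0, hc1, hc2, hc3, hc4, hc5, hc6, hc7, hc8, hc9, hc10, hc11, hc12, hn, hx⟩ := h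
  have hlt (k : ℕ) : k % 2 ≤ 1 := Nat.le_of_lt_succ (Nat.mod_lt _ two_pos)
  refine ⟨(c0 + c7) % 2, (c1 + c8 + c7) % 2, (c2 + c9 + c8) % 2, (c3 + c10 + c9) % 2, (c4 + c11 + c10) % 2, (c5 + c12 + c11) % 2, (c6 + c12) % 2,
    hlt _, hlt _, hlt _, hlt _, hlt _, hlt _, hlt _, (congrArg _root_.red hn).trans (red_horner _ _ _ _ _ _ _ _ _ _ _ _ _
    (hc0.trans hB) (hc1.trans hB) (hc2.trans hB) (hc3.trans hB) (hc4.trans hB) (hc5.trans hB) (hc6.trans hB) (hc7.trans hB) (hc8.trans hB) (hc9.trans hB) (hc10.trans hB) (hc11.trans hB) (hc12.trans hB)), ?_⟩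
  have hp : ∀ k : ℕ, ((k % 2 : ℕ) : F) = k := fun k => (CharP.cast_eq_mod F 2 k).symm
  simp only [hx, hp]
  push_cast
  linear_combination ((c7 : F) * α ^ 0 + (c8 : F) * α ^ 1 + (c9 : F) * α ^ 2 + (c10 : F) * α ^ 3 + (c11 : F) * α ^ 4 + (c12 : F) * α ^ 5) * hα

theorem Code.one : Code α 1 1 :=
  ⟨1, 0, 0, 0, 0, 0, 0, by simp, by simp, by simp, by simp, by simp, by simp, by simp, by simp,
    by simp⟩

/-- The code of the `k`-th power. -/
def codePow (n : ℕ) : ℕ → ℕ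
  | 0 => 1
  | k + 1 => red (n * codePow n k)

theorem Code.pow [CharP F 2] (hα : α ^ 7 = α + 1) {n : ℕ} {x : F} (h : Code α n x) (k : ℕ) :
    Code α (codePow n k) (x ^ k) := by
  induction k with
  | zero =>
    rw [pow_zero]
    exact Code.one
  | succ k ih =>
    rw [pow_succ']
    exact (h.mul ih).red hα (by norm_num)

theorem codePow_127 : ∀ k < 128, k ≠ 0 →
    codePow (k % 2 + 256 * (k / 2 % 2 + 256 * (k / 4 % 2 + 256 * (k / 8 % 2 + 256 * (k / 16 % 2 + 256 * (k / 32 % 2 + 256 * (k / 64 % 2))))))) 127 = 1 := by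
  decide +kernel

theorem Code.ne_zero [CharP F 2] (hα : α ^ 7 = α + 1) {n : ℕ} {x : F} (h : Code α n x)
    (hn : n ≠ 0) : x ≠ 0 := by
  have hp := h.pow hα 127
  have h1 : codePow n 127 = 1 := by
    obtain ⟨c0, c1, c2, c3, c4, c5, c6, hc0, hc1, hc2, hc3, hc4, hc5, hc6, rfl, -⟩ := h
    -- the index of the code is the same bit string read in base 2
    have := codePow_127 (c0 + 2 * (c1 + 2 * (c2 + 2 * (c3 + 2 * (c4 + 2 * (c5 + 2 * (c6))))))) (by omega) (by omega)
    rwa [show (c0 + 2 * (c1 + 2 * (c2 + 2 * (c3 + 2 * (c4 + 2 * (c5 + 2 * (c6))))))) % 2 = c0 by omega,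
      show (c0 + 2 * (c1 + 2 * (c2 + 2 * (c3 + 2 * (c4 + 2 * (c5 + 2 * (c6))))))) / 2 % 2 = c1 by omega,
      show (c0 + 2 * (c1 + 2 * (c2 + 2 * (c3 + 2 * (c4 + 2 * (c5 + 2 * (c6))))))) / 4 % 2 = c2 by omega,
      show (c0 + 2 * (c1 + 2 * (c2 + 2 * (c3 + 2 * (c4 + 2 * (c5 + 2 * (c6))))))) / 8 % 2 = c3 by omega,
      show (c0 + 2 * (c1 + 2 * (c2 + 2 * (c3 + 2 * (c4 + 2 * (c5 + 2 * (c6))))))) / 16 % 2 = c4 by omega,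
      show (c0 + 2 * (c1 + 2 * (c2 + 2 * (c3 + 2 * (c4 + 2 * (c5 + 2 * (c6))))))) / 32 % 2 = c5 by omega,
      show (c0 + 2 * (c1 + 2 * (c2 + 2 * (c3 + 2 * (c4 + 2 * (c5 + 2 * (c6))))))) / 64 % 2 = c6 by omega] at this
  obtain ⟨c0, c1, c2, c3, c4, c5, c6, hc0, hc1, hc2, hc3, hc4, hc5, hc6, hc, hx⟩ := hp
  rintro rfl
  rw [h1] at hc
  have e0 : c0 = 1 := by omega
  have e1 : c1 = 0 := by omega
  have e2 : c2 = 0 := by omega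
  have e3 : c3 = 0 := by omega
  have e4 : c4 = 0 := by omega
  have e5 : c5 = 0 := by omega
  have e6 : c6 = 0 := by omega
  rw [e0, e1, e2, e3, e4, e5, e6] at hx
  norm_num at hx

end Codes

/-! ### The search over admissible column choices -/

/-- Code of the entry of `𝔥_4` in row `r`, column `q` (0-based): row `r` is the sequence
`H_3, H_2, H_1, H_0` of 8 entries, moved `2r` places to the right. -/
def ent (r q : ℕ) : ℕ :=
  bif Nat.ble (2 * r) q then
    [1, 1, 281474993487872, 282578783371265,
      1103806595072, 1, 4294967553, 4311810049].getD (q - 2 * r) 0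
  else 0

/-- Pass the five entries of column `q` to `k`. -/
def withCol (q : ℕ) (k : ℕ → ℕ → ℕ → ℕ → ℕ → Bool) : Bool :=
  force (ent 0 q) fun x0 => force (ent 1 q) fun x1 => force (ent 2 q) fun x2 =>
    force (ent 3 q) fun x3 => force (ent 4 q) fun x4 => k x0 x1 x2 x3 x4

/-- `p` holds on the eight numbers from `l` on. -/
def all8 (l : ℕ) (p : ℕ → Bool) : Bool :=
  force l p && force (l + 1) p && force (l + 2) p && force (l + 3) p &&
    force (l + 4) p && force (l + 5) p && force (l + 6) p && force (l + 7) p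

theorem all8_spec {l : ℕ} {p : ℕ → Bool} (h : all8 l p = true) {q : ℕ} (h1 : l ≤ q)
    (h2 : q < l + 8) : p q = true := by
  simp only [all8, force_eq, Bool.and_eq_true] at h
  obtain ⟨i, rfl⟩ := Nat.exists_eq_add_of_le h1
  have hi : i < 8 := by omega
  interval_cases i <;> simp_all

/-- Given the codes of the 4 × 4 minors of the first four columns, the last of which is `q`: every
admissible fifth column gives a nonzero minor. -/
def level5 (w0123 w0124 w0134 w0234 w1234 q : ℕ) : Bool :=
  all8 8 fun e => Nat.ble e q || withCol e fun e0 e1 e2 e3 e4 =>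
    !(Nat.beq (red (w0123 * e4 + w0124 * e3 + w0134 * e2 + w0234 * e1 + w1234 * e0)) 0)

/-- Given the codes of the 3 × 3 minors of the first three columns, the last of which is `q`: every
admissible choice of two more columns gives a nonzero minor. -/
def level4 (w012 w013 w014 w023 w024 w034 w123 w124 w134 w234 q : ℕ) : Bool :=
  all8 6 fun d => Nat.ble d q || withCol d fun d0 d1 d2 d3 d4 =>
    force (red (w012 * d3 + w013 * d2 + w023 * d1 + w123 * d0)) fun v0123 =>
    force (red (w012 * d4 + w014 * d2 + w024 * d1 + w124 * d0)) fun v0124 =>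
    force (red (w013 * d4 + w014 * d3 + w034 * d1 + w134 * d0)) fun v0134 =>
    force (red (w023 * d4 + w024 * d3 + w034 * d2 + w234 * d0)) fun v0234 =>
    force (red (w123 * d4 + w124 * d3 + w134 * d2 + w234 * d1)) fun v1234 =>
    level5 v0123 v0124 v0134 v0234 v1234 d

/-- Given the codes of the 2 × 2 minors of the first two columns, the last of which is `q`: every
admissible choice of three more columns gives a nonzero minor. -/
def level3 (w01 w02 w03 w04 w12 w13 w14 w23 w24 w34 q : ℕ) : Bool :=
  all8 4 fun c => Nat.ble c q || withCol c fun c0 c1 c2 c3 c4 =>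
    force (red (w01 * c2 + w02 * c1 + w12 * c0)) fun v012 =>
    force (red (w01 * c3 + w03 * c1 + w13 * c0)) fun v013 =>
    force (red (w01 * c4 + w04 * c1 + w14 * c0)) fun v014 =>
    force (red (w02 * c3 + w03 * c2 + w23 * c0)) fun v023 =>
    force (red (w02 * c4 + w04 * c2 + w24 * c0)) fun v024 =>
    force (red (w03 * c4 + w04 * c3 + w34 * c0)) fun v034 =>
    force (red (w12 * c3 + w13 * c2 + w23 * c1)) fun v123 =>
    force (red (w12 * c4 + w14 * c2 + w24 * c1)) fun v124 =>
    force (red (w13 * c4 + w14 * c3 + w34 * c1)) fun v134 =>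
    force (red (w23 * c4 + w24 * c3 + w34 * c2)) fun v234 =>
    level4 v012 v013 v014 v023 v024 v034 v123 v124 v134 v234 c

/-- Given the codes of the entries of the first column `q`: every admissible choice of four more
columns gives a nonzero minor. -/
def level2 (a0 a1 a2 a3 a4 q : ℕ) : Bool :=
  all8 2 fun b => Nat.ble b q || withCol b fun b0 b1 b2 b3 b4 =>
    force (red (a0 * b1 + a1 * b0)) fun v01 =>
    force (red (a0 * b2 + a2 * b0)) fun v02 =>
    force (red (a0 * b3 + a3 * b0)) fun v03 =>
    force (red (a0 * b4 + a4 * b0)) fun v04 =>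
    force (red (a1 * b2 + a2 * b1)) fun v12 =>
    force (red (a1 * b3 + a3 * b1)) fun v13 =>
    force (red (a1 * b4 + a4 * b1)) fun v14 =>
    force (red (a2 * b3 + a3 * b2)) fun v23 =>
    force (red (a2 * b4 + a4 * b2)) fun v24 =>
    force (red (a3 * b4 + a4 * b3)) fun v34 =>
    level3 v01 v02 v03 v04 v12 v13 v14 v23 v24 v34 b

/-- Every admissible choice of five columns gives a nonzero minor. -/
def level1 : Bool :=
  all8 0 fun a => withCol a fun a0 a1 a2 a3 a4 => level2 a0 a1 a2 a3 a4 a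

theorem level1_true : level1 = true := by
  decide +kernel

/-! ### From the search to the minors -/

section Minors

variable {F : Type*} [Field F]

/-- The 5 × 5 minor of `E` in characteristic 2, from the 4 × 4 minors of its first four columns and
the last column `e`, by Laplace expansion without signs. -/
def minor5 (E : ℕ → ℕ → F) (W0123 W0124 W0134 W0234 W1234 : F) (e : ℕ) : F :=
  W0123 * E 4 e + W0124 * E 3 e + W0134 * E 2 e + W0234 * E 1 e + W1234 * E 0 e

/-- As `minor5`, from the 3 × 3 minors of the first three columns and the columns `d`, `e`. -/
def minor4 (E : ℕ → ℕ → F) (W012 W013 W014 W023 W024 W034 W123 W124 W134 W234 : F) (d e : ℕ) : F :=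
  minor5 E
    (W012 * E 3 d + W013 * E 2 d + W023 * E 1 d + W123 * E 0 d)
    (W012 * E 4 d + W014 * E 2 d + W024 * E 1 d + W124 * E 0 d)
    (W013 * E 4 d + W014 * E 3 d + W034 * E 1 d + W134 * E 0 d)
    (W023 * E 4 d + W024 * E 3 d + W034 * E 2 d + W234 * E 0 d)
    (W123 * E 4 d + W124 * E 3 d + W134 * E 2 d + W234 * E 1 d)
    e

/-- As `minor5`, from the 2 × 2 minors of the first two columns and the columns `c`, `d`, `e`. -/
def minor3 (E : ℕ → ℕ → F) (W01 W02 W03 W04 W12 W13 W14 W23 W24 W34 : F) (c d e : ℕ) : F :=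
  minor4 E
    (W01 * E 2 c + W02 * E 1 c + W12 * E 0 c)
    (W01 * E 3 c + W03 * E 1 c + W13 * E 0 c)
    (W01 * E 4 c + W04 * E 1 c + W14 * E 0 c)
    (W02 * E 3 c + W03 * E 2 c + W23 * E 0 c)
    (W02 * E 4 c + W04 * E 2 c + W24 * E 0 c)
    (W03 * E 4 c + W04 * E 3 c + W34 * E 0 c)
    (W12 * E 3 c + W13 * E 2 c + W23 * E 1 c)
    (W12 * E 4 c + W14 * E 2 c + W24 * E 1 c)
    (W13 * E 4 c + W14 * E 3 c + W34 * E 1 c)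
    (W23 * E 4 c + W24 * E 3 c + W34 * E 2 c)
    d e

/-- As `minor5`, from the entries of the first column and the columns `b`, `c`, `d`, `e`. -/
def minor2 (E : ℕ → ℕ → F) (A0 A1 A2 A3 A4 : F) (b c d e : ℕ) : F :=
  minor3 E
    (A0 * E 1 b + A1 * E 0 b)
    (A0 * E 2 b + A2 * E 0 b)
    (A0 * E 3 b + A3 * E 0 b)
    (A0 * E 4 b + A4 * E 0 b)
    (A1 * E 2 b + A2 * E 1 b)
    (A1 * E 3 b + A3 * E 1 b)
    (A1 * E 4 b + A4 * E 1 b)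
    (A2 * E 3 b + A3 * E 2 b)
    (A2 * E 4 b + A4 * E 2 b)
    (A3 * E 4 b + A4 * E 3 b)
    c d e

/-- The entry of `𝔥_4` in row `r`, column `q` (0-based), laid out as in `ent`. -/
def entF (α : F) (r q : ℕ) : F :=
  if 2 * r ≤ q then
    [1, 1, α^6+α^3, α^6+α^5+α^4+α^2+1, α^5+α^4, 1, α^4+α+1, α^4+α^3+α^2+1].getD (q - 2 * r) 0
  else 0

theorem code_ent (α : F) (r q : ℕ) : Code α (ent r q) (entF α r q) := by
  have h0 : Code α 0 0 := ⟨0, 0, 0, 0, 0, 0, 0, by simp⟩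
  by_cases h : 2 * r ≤ q
  · simp only [ent, entF, h, Nat.ble_eq_true_of_le h, cond_true, if_true]
    obtain hk | hk := lt_or_ge (q - 2 * r) 8
    · generalize q - 2 * r = k at hk
      interval_cases k
      · exact Code.one
      · exact Code.one
      · exact ⟨0, 0, 0, 1, 0, 0, 1, by simp; ring⟩
      · exact ⟨1, 0, 1, 0, 1, 1, 1, by simp; ring⟩
      · exact ⟨0, 0, 0, 0, 1, 1, 0, by simp; ring⟩
      · exact Code.one
      · exact ⟨1, 1, 0, 0, 1, 0, 0, by simp; ring⟩
      · exact ⟨1, 0, 1, 1, 1, 0, 0, by simp; ring⟩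
    · rwa [List.getD_eq_default _ _ hk, List.getD_eq_default _ _ hk]
  · have h' : Nat.ble (2 * r) q = false := 
      Bool.eq_false_iff.mpr fun e => h (Nat.le_of_ble_eq_true e)
    simpa only [ent, entF, h, h', cond_false, if_false]

theorem pcm_eq_entF (α : F) (r : Fin 5) (q : Fin 16) :
    pcm 2 1 3 (by norm_num) (by norm_num) (Hquad (α^4+α+1) (α^5+α^4) (α^6+α^3) 1
      (α^4+α^3+α^2+1) 1 (α^6+α^5+α^4+α^2+1) 1) 4 r q = entF α r q := by
  fin_cases r <;> fin_cases q <;> rfl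

variable {α : F} [CharP F 2]

theorem level5_sound (hα : α ^ 7 = α + 1) {E : ℕ → ℕ → F}
    (hE : ∀ r q, r < 5 → q < 16 → Code α (ent r q) (E r q))
    {w0123 w0124 w0134 w0234 w1234 q : ℕ} {W0123 W0124 W0134 W0234 W1234 : F}
    (h0123 : Code α w0123 W0123) (h0124 : Code α w0124 W0124) (h0134 : Code α w0134 W0134)
    (h0234 : Code α w0234 W0234) (h1234 : Code α w1234 W1234)
    (h : level5 w0123 w0124 w0134 w0234 w1234 q = true) {e : ℕ}
    (hqe : q < e) (hle : 8 ≤ e) (hue : e < 16) :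
    minor5 E W0123 W0124 W0134 W0234 W1234 e ≠ 0 := by
  have e0 := hE 0 e (by norm_num) (by omega)
  have e1 := hE 1 e (by norm_num) (by omega)
  have e2 := hE 2 e (by norm_num) (by omega)
  have e3 := hE 3 e (by norm_num) (by omega)
  have e4 := hE 4 e (by norm_num) (by omega)
  have key := all8_spec h hle hue
  rw [Bool.or_eq_true, Nat.ble_eq, or_iff_right (not_le.mpr hqe)] at key
  simp only [withCol, force_eq] at key
  refine ((((((h0123.mul e4).add (h0124.mul e3)).add (h0134.mul e2)).add (h0234.mul e1)).add (h1234.mul e0)).red hα (by norm_num)).ne_zero hα fun h0 => ?_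
  simp [h0] at key

theorem level4_sound (hα : α ^ 7 = α + 1) {E : ℕ → ℕ → F}
    (hE : ∀ r q, r < 5 → q < 16 → Code α (ent r q) (E r q))
    {w012 w013 w014 w023 w024 w034 w123 w124 w134 w234 q : ℕ} {W012 W013 W014 W023 W024 W034 W123 W124 W134 W234 : F}
    (h012 : Code α w012 W012) (h013 : Code α w013 W013) (h014 : Code α w014 W014)
    (h023 : Code α w023 W023) (h024 : Code α w024 W024) (h034 : Code α w034 W034)
    (h123 : Code α w123 W123) (h124 : Code α w124 W124) (h134 : Code α w134 W134)
    (h234 : Code α w234 W234)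
    (h : level4 w012 w013 w014 w023 w024 w034 w123 w124 w134 w234 q = true) {d e : ℕ}
    (hqd : q < d) (hld : 6 ≤ d) (hud : d < 14)
    (hde : d < e) (hle : 8 ≤ e) (hue : e < 16) :
    minor4 E W012 W013 W014 W023 W024 W034 W123 W124 W134 W234 d e ≠ 0 := by
  have e0 := hE 0 d (by norm_num) (by omega)
  have e1 := hE 1 d (by norm_num) (by omega)
  have e2 := hE 2 d (by norm_num) (by omega)
  have e3 := hE 3 d (by norm_num) (by omega)
  have e4 := hE 4 d (by norm_num) (by omega)
  have key := all8_spec h hld hud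
  rw [Bool.or_eq_true, Nat.ble_eq, or_iff_right (not_le.mpr hqd)] at key
  simp only [withCol, force_eq] at key
  exact level5_sound hα hE
    (((((h012.mul e3).add (h013.mul e2)).add (h023.mul e1)).add (h123.mul e0)).red hα (by norm_num))
    (((((h012.mul e4).add (h014.mul e2)).add (h024.mul e1)).add (h124.mul e0)).red hα (by norm_num))
    (((((h013.mul e4).add (h014.mul e3)).add (h034.mul e1)).add (h134.mul e0)).red hα (by norm_num))
    (((((h023.mul e4).add (h024.mul e3)).add (h034.mul e2)).add (h234.mul e0)).red hα (by norm_num))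
    (((((h123.mul e4).add (h124.mul e3)).add (h134.mul e2)).add (h234.mul e1)).red hα (by norm_num))
    key hde hle hue

theorem level3_sound (hα : α ^ 7 = α + 1) {E : ℕ → ℕ → F}
    (hE : ∀ r q, r < 5 → q < 16 → Code α (ent r q) (E r q))
    {w01 w02 w03 w04 w12 w13 w14 w23 w24 w34 q : ℕ} {W01 W02 W03 W04 W12 W13 W14 W23 W24 W34 : F}
    (h01 : Code α w01 W01) (h02 : Code α w02 W02) (h03 : Code α w03 W03) (h04 : Code α w04 W04)
    (h12 : Code α w12 W12) (h13 : Code α w13 W13) (h14 : Code α w14 W14) (h23 : Code α w23 W23)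
    (h24 : Code α w24 W24) (h34 : Code α w34 W34)
    (h : level3 w01 w02 w03 w04 w12 w13 w14 w23 w24 w34 q = true) {c d e : ℕ}
    (hqc : q < c) (hlc : 4 ≤ c) (huc : c < 12)
    (hcd : c < d) (hld : 6 ≤ d) (hud : d < 14)
    (hde : d < e) (hle : 8 ≤ e) (hue : e < 16) :
    minor3 E W01 W02 W03 W04 W12 W13 W14 W23 W24 W34 c d e ≠ 0 := by
  have e0 := hE 0 c (by norm_num) (by omega)
  have e1 := hE 1 c (by norm_num) (by omega)
  have e2 := hE 2 c (by norm_num) (by omega)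
  have e3 := hE 3 c (by norm_num) (by omega)
  have e4 := hE 4 c (by norm_num) (by omega)
  have key := all8_spec h hlc huc
  rw [Bool.or_eq_true, Nat.ble_eq, or_iff_right (not_le.mpr hqc)] at key
  simp only [withCol, force_eq] at key
  exact level4_sound hα hE
    ((((h01.mul e2).add (h02.mul e1)).add (h12.mul e0)).red hα (by norm_num))
    ((((h01.mul e3).add (h03.mul e1)).add (h13.mul e0)).red hα (by norm_num))
    ((((h01.mul e4).add (h04.mul e1)).add (h14.mul e0)).red hα (by norm_num))
    ((((h02.mul e3).add (h03.mul e2)).add (h23.mul e0)).red hα (by norm_num))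
    ((((h02.mul e4).add (h04.mul e2)).add (h24.mul e0)).red hα (by norm_num))
    ((((h03.mul e4).add (h04.mul e3)).add (h34.mul e0)).red hα (by norm_num))
    ((((h12.mul e3).add (h13.mul e2)).add (h23.mul e1)).red hα (by norm_num))
    ((((h12.mul e4).add (h14.mul e2)).add (h24.mul e1)).red hα (by norm_num))
    ((((h13.mul e4).add (h14.mul e3)).add (h34.mul e1)).red hα (by norm_num))
    ((((h23.mul e4).add (h24.mul e3)).add (h34.mul e2)).red hα (by norm_num))
    key hcd hld hud hde hle hue

theorem level2_sound (hα : α ^ 7 = α + 1) {E : ℕ → ℕ → F}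
    (hE : ∀ r q, r < 5 → q < 16 → Code α (ent r q) (E r q))
    {a0 a1 a2 a3 a4 q : ℕ} {A0 A1 A2 A3 A4 : F}
    (h0 : Code α a0 A0) (h1 : Code α a1 A1) (h2 : Code α a2 A2) (h3 : Code α a3 A3)
    (h4 : Code α a4 A4)
    (h : level2 a0 a1 a2 a3 a4 q = true) {b c d e : ℕ}
    (hqb : q < b) (hlb : 2 ≤ b) (hub : b < 10)
    (hbc : b < c) (hlc : 4 ≤ c) (huc : c < 12)
    (hcd : c < d) (hld : 6 ≤ d) (hud : d < 14)
    (hde : d < e) (hle : 8 ≤ e) (hue : e < 16) :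
    minor2 E A0 A1 A2 A3 A4 b c d e ≠ 0 := by
  have e0 := hE 0 b (by norm_num) (by omega)
  have e1 := hE 1 b (by norm_num) (by omega)
  have e2 := hE 2 b (by norm_num) (by omega)
  have e3 := hE 3 b (by norm_num) (by omega)
  have e4 := hE 4 b (by norm_num) (by omega)
  have key := all8_spec h hlb hub
  rw [Bool.or_eq_true, Nat.ble_eq, or_iff_right (not_le.mpr hqb)] at key
  simp only [withCol, force_eq] at key
  exact level3_sound hα hE
    (((h0.mul e1).add (h1.mul e0)).red hα (by norm_num))
    (((h0.mul e2).add (h2.mul e0)).red hα (by norm_num))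
    (((h0.mul e3).add (h3.mul e0)).red hα (by norm_num))
    (((h0.mul e4).add (h4.mul e0)).red hα (by norm_num))
    (((h1.mul e2).add (h2.mul e1)).red hα (by norm_num))
    (((h1.mul e3).add (h3.mul e1)).red hα (by norm_num))
    (((h1.mul e4).add (h4.mul e1)).red hα (by norm_num))
    (((h2.mul e3).add (h3.mul e2)).red hα (by norm_num))
    (((h2.mul e4).add (h4.mul e2)).red hα (by norm_num))
    (((h3.mul e4).add (h4.mul e3)).red hα (by norm_num))
    key hbc hlc huc hcd hld hud hde hle hue

theorem det_fin_four (A : Matrix (Fin 4) (Fin 4) F) :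
    A.det =
      A 0 0 * (A.submatrix Fin.succ (Fin.succAbove 0)).det +
      A 0 1 * (A.submatrix Fin.succ (Fin.succAbove 1)).det +
      A 0 2 * (A.submatrix Fin.succ (Fin.succAbove 2)).det +
      A 0 3 * (A.submatrix Fin.succ (Fin.succAbove 3)).det := by
  simp [Matrix.det_succ_row_zero (n := 3), Fin.sum_univ_four, CharTwo.neg_eq]

theorem det_fin_five (A : Matrix (Fin 5) (Fin 5) F) :
    A.det =
      A 0 0 * (A.submatrix Fin.succ (Fin.succAbove 0)).det +
      A 0 1 * (A.submatrix Fin.succ (Fin.succAbove 1)).det +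
      A 0 2 * (A.submatrix Fin.succ (Fin.succAbove 2)).det +
      A 0 3 * (A.submatrix Fin.succ (Fin.succAbove 3)).det +
      A 0 4 * (A.submatrix Fin.succ (Fin.succAbove 4)).det := by
  simp [Matrix.det_succ_row_zero (n := 4), Fin.sum_univ_five, CharTwo.neg_eq]

theorem det_eq_minor2 (E : ℕ → ℕ → F) (j : Fin 5 → ℕ) :
    (Matrix.of fun r s : Fin 5 => E r (j s)).det =
      minor2 E (E 0 (j 0)) (E 1 (j 0)) (E 2 (j 0)) (E 3 (j 0)) (E 4 (j 0))
        (j 1) (j 2) (j 3) (j 4) := by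
  simp only [det_fin_five, det_fin_four, Matrix.det_fin_three, minor2, minor3, minor4, minor5,
    CharTwo.sub_eq_add]
  simp [Fin.succAbove]
  ring

theorem completeJMDP (hα : α ^ 7 = α + 1) :
    CompleteJMDP 2 1 3 (by norm_num) (by norm_num) (Hquad (α^4+α+1) (α^5+α^4) (α^6+α^3) 1
      (α^4+α^3+α^2+1) 1 (α^6+α^5+α^4+α^2+1) 1) 4 := by
  intro js hjs
  obtain ⟨hmono, hadm⟩ := hjs
  change Fin 5 → Fin 16 at js
  have hdet : ((pcm 2 1 3 (by norm_num) (by norm_num) (Hquad (α^4+α+1) (α^5+α^4) (α^6+α^3) 1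
      (α^4+α^3+α^2+1) 1 (α^6+α^5+α^4+α^2+1) 1) 4).submatrix id js).det =
      (Matrix.of fun r s : Fin 5 => entF α r (js s)).det := by
    congr 1
    ext r s
    exact pcm_eq_entF α r (js s)
  rw [hdet, det_eq_minor2]
  have m (i k : Fin 5) (h : i < k) : (js i : ℕ) < js k := hmono h
  have l0 : (js 0 : ℕ) < 8 := (hadm 1 (by norm_num) (by norm_num) (by norm_num) (by norm_num)).2
  have l1 : 2 ≤ (js 1 : ℕ) ∧ (js 1 : ℕ) < 10 :=
    ⟨(hadm 1 (by norm_num) (by norm_num) (by norm_num) (by norm_num)).1,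
      (hadm 2 (by norm_num) (by norm_num) (by norm_num) (by norm_num)).2⟩
  have l2 : 4 ≤ (js 2 : ℕ) ∧ (js 2 : ℕ) < 12 :=
    ⟨(hadm 2 (by norm_num) (by norm_num) (by norm_num) (by norm_num)).1,
      (hadm 3 (by norm_num) (by norm_num) (by norm_num) (by norm_num)).2⟩
  have l3 : 6 ≤ (js 3 : ℕ) ∧ (js 3 : ℕ) < 14 :=
    ⟨(hadm 3 (by norm_num) (by norm_num) (by norm_num) (by norm_num)).1,
      (hadm 4 (by norm_num) (by norm_num) (by norm_num) (by norm_num)).2⟩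
  have l4 : 8 ≤ (js 4 : ℕ) := (hadm 4 (by norm_num) (by norm_num) (by norm_num) (by norm_num)).1
  have key := all8_spec level1_true (Nat.zero_le (js 0 : ℕ)) l0
  simp only [withCol, force_eq] at key
  exact level2_sound hα (fun r q _ _ => code_ent α r q) (code_ent α _ _) (code_ent α _ _) (code_ent α _ _)
    (code_ent α _ _) (code_ent α _ _) key (m 0 1 (by decide)) l1.1 l1.2 (m 1 2 (by decide)) l2.1 l2.2
    (m 2 3 (by decide)) l3.1 l3.2 (m 3 4 (by decide)) l4 (js 4).isLt

end Minors

/-- Let `F_128 = F_2[X]/(X⁷+X+1)` with `α` the class of `X`. Then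
`H_3 = [1, 1]`, `H_2 = [α⁶+α³, α⁶+α⁵+α⁴+α²+1]`, `H_1 = [α⁵+α⁴, 1]`,
`H_0 = [α⁴+α+1, α⁴+α³+α²+1]` defines a `(2,1,3)` complete `4`-MDP convolutional code over
`F_128`: the cubics `h_1(z)` and `h_2(z)` are coprime (their resultant, the determinant of
the Sylvester matrix, equals `α² + α + 1 ≠ 0`) and the complete `4`-MDP minor condition
holds for `𝔥_4 ∈ F_128^{5×16}`. -/
theorem stmt19 (F : Type*) [Field F] [Fintype F] (hF : Fintype.card F = 128)
    (α : F) (hα : α ^ 7 + α + 1 = 0) :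
    (!![(1 : F), α^6+α^3, α^5+α^4, α^4+α+1, 0, 0;
        0, 1, α^6+α^3, α^5+α^4, α^4+α+1, 0;
        0, 0, 1, α^6+α^3, α^5+α^4, α^4+α+1;
        1, α^6+α^5+α^4+α^2+1, 1, α^4+α^3+α^2+1, 0, 0;
        0, 1, α^6+α^5+α^4+α^2+1, 1, α^4+α^3+α^2+1, 0;
        0, 0, 1, α^6+α^5+α^4+α^2+1, 1, α^4+α^3+α^2+1]).det = α ^ 2 + α + 1 ∧
    α ^ 2 + α + 1 ≠ 0 ∧
    Is213 4 (α^4+α+1) (α^5+α^4) (α^6+α^3) 1 (α^4+α^3+α^2+1) 1 (α^6+α^5+α^4+α^2+1) 1 := by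
  -- `128 = 2⁷`, so the characteristic is 2
  have : CharP F 2 := by
    obtain ⟨p, hp⟩ := CharP.exists F
    obtain ⟨n, hp', hn⟩ := FiniteField.card F p
    have h : p ∣ 2 ^ 7 := by
      rw [show 2 ^ 7 = Fintype.card F by rw [hF]; norm_num, hn]
      exact dvd_pow_self p n.ne_zero
    rwa [← (Nat.prime_dvd_prime_iff_eq hp' Nat.prime_two).mp (hp'.dvd_of_dvd_pow h)]
  have h2 : (2 : F) = 0 := CharTwo.two_eq_zero
  have hα' : α ^ 7 = α + 1 := by
    linear_combination hα - (α + 1) * h2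
  refine ⟨?_, ?_, ?_, completeJMDP hα'⟩
  · simp [Matrix.det_succ_row_zero, Fin.sum_univ_succ, Fin.succAbove]
    linear_combination (75 + 76 * α + 39 * α^2 + 3 * α^3 - 37 * α^4 - 45 * α^5 - 37 * α^6 - 25
      * α^7 - 26 * α^8 - 12 * α^9 + 10 * α^10 + 19 * α^11 + 18 * α^12 + 17 * α^13 + 16 * α^14 +
      15 * α^15 + 11 * α^16 + 5 * α^17 + α^18) * hα + (-38 - 77 * α - 56 * α^2 - 18 * α^3 + 26 *
      α^4 + 48 * α^5 + 47 * α^6) * h2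
  · -- the inverse is `α + α^2 + α^4 + α^5`
    intro h0
    have h1 : (α ^ 2 + α + 1) * (α + α^2 + α^4 + α^5) = 1 := by
      linear_combination (1) * hα + (-1 + α^2 + α^3 + α^4 + α^5 + α^6) * h2
    rw [h0, zero_mul] at h1
    exact zero_ne_one h1
  · -- coefficients of `1, z, …, z⁵` in the Bézout identity
    have k0 : (1 + α + α^3) * (1 + α + α^4) + (1 + α + α^2 + α^4 + α^5) * (1 + α^2 + α^3 + α^4) = (1 : F) := by
      linear_combination (3 + 2 * α + α^2) * hα + (-1 - α + α^3 + 3 * α^4 + 2 * α^5 + α^6) * h2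
    have k1 : (1 + α + α^3) * (α^4 + α^5) + (1 + α + α^2 + α^4 + α^5) * (1) + (α^5 + α^6) * (1 + α + α^4) + (α^4) * (1 + α^2 + α^3 + α^4) = (0 : F) := by
      linear_combination (3 + 2 * α + α^2 + α^3) * hα + (-1 - 2 * α - α^2 - α^3 + α^4 + 2 * α^5
      + 2 * α^6) * h2
    have k2 : (1 + α + α^3) * (α^3 + α^6) + (1 + α + α^2 + α^4 + α^5) * (1 + α^2 + α^4 + α^5 + α^6) + (α^5 + α^6) * (α^4 + α^5) + (α^4) * (1) + (α + α^4 + α^5 + α^6) * (1 + α + α^4) + (α + α^4 + α^5 + α^6) * (1 + α^2 + α^3 + α^4) = (0 : F) := by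
      linear_combination (7 + 6 * α + 7 * α^2 + 6 * α^3 + 2 * α^4) * hα + (-3 - 5 * α - 5 * α^2
      - 5 * α^3 + 3 * α^5 + 5 * α^6) * h2
    have k3 : (1 + α + α^3) * (1) + (1 + α + α^2 + α^4 + α^5) * (1) + (α^5 + α^6) * (α^3 + α^6) + (α^4) * (1 + α^2 + α^4 + α^5 + α^6) + (α + α^4 + α^5 + α^6) * (α^4 + α^5) + (α + α^4 + α^5 + α^6) * (1) = (0 : F) := by
      linear_combination (3 * α + 4 * α^2 + 3 * α^3 + 2 * α^4 + α^5) * hα + (1 - 3 * α^2 - 3 *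
      α^3 - α^4 + α^6) * h2
    have k4 : (α^5 + α^6) * (1) + (α^4) * (1) + (α + α^4 + α^5 + α^6) * (α^3 + α^6) + (α + α^4 + α^5 + α^6) * (1 + α^2 + α^4 + α^5 + α^6) = (0 : F) := by
      linear_combination (4 + 3 * α + 3 * α^2 + 4 * α^3 + 3 * α^4 + 2 * α^5) * hα + (-2 - 3 * α
      - 3 * α^2 - 3 * α^3 - 2 * α^4 - α^5 + α^6) * h2
    have k5 : (α + α^4 + α^5 + α^6) * (1) + (α + α^4 + α^5 + α^6) * (1) = (0 : F) := by
      linear_combination (0) * hα + (α + α^4 + α^5 + α^6) * h2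
    refine ⟨C (1 + α + α^3) + C (α^5 + α^6) * X + C (α + α^4 + α^5 + α^6) * X ^ 2, C (1 + α + α^2 + α^4 + α^5) + C (α^4) * X + C (α + α^4 + α^5 + α^6) * X ^ 2, ?_⟩
    simp only [hpoly3]
    have K0 := congrArg (C (R := F)) k0
    have K1 := congrArg (C (R := F)) k1
    have K2 := congrArg (C (R := F)) k2
    have K3 := congrArg (C (R := F)) k3
    have K4 := congrArg (C (R := F)) k4
    have K5 := congrArg (C (R := F)) k5
    simp only [map_add, map_mul, map_pow, map_one, map_zero] at K0 K1 K2 K3 K4 K5 ⊢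
    linear_combination K0 + X * K1 + X ^ 2 * K2 + X ^ 3 * K3 + X ^ 4 * K4 + X ^ 5 * K5
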